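/- (Change of shift) Let ψ be a regular N-function such that both ψ and its conjugate ψ* satisfy the Δ₂-condition. Then for every δ ∈ (0,1) there exists a constant c_δ > 0, depending only on δ, Δ₂(ψ) and Δ₂(ψ*), such that for every d, n ≥ 1, every P, Q ∈ ℝ^{d×n} and every t ≥ 0: ψ_{|P|}(t) ≤ c_δ·ψ_{|Q|}(t) + δ·ψ_{|P|}(|P−Q|) and (ψ_{|P|})*(t) ≤ c_δ·(ψ_{|Q|})*(t) + δ·ψ_{|P|}(|P−Q|), where (ψ_a)* denotes the conjugate of the shifted N-function ψ_a and |·| is the Frobenius norm on ℝ^{d×n}. -/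

import Mathlib

open Real Filter Set Topology

noncomputable section

/-- An N-function: convex on `[0,∞)`, vanishing at `0`, positive on `(0,∞)`,
with `ψ t / t → 0` as `t → 0⁺` and `ψ t / t → ∞` as `t → ∞`. -/
def IsNFunction (ψ : ℝ → ℝ) : Prop :=
  ConvexOn ℝ (Set.Ici 0) ψ ∧ ψ 0 = 0 ∧ (∀ t > 0, 0 < ψ t) ∧
    Filter.Tendsto (fun t => ψ t / t) (nhdsWithin 0 (Set.Ioi 0)) (nhds 0) ∧
    Filter.Tendsto (fun t => ψ t / t) Filter.atTop Filter.atTop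

/-- A regular N-function: an N-function which is `C¹` on `[0,∞)`, `C²` on `(0,∞)`,
with `ψ'' t > 0` for all `t > 0`. -/
def IsRegularNFunction (ψ : ℝ → ℝ) : Prop :=
  IsNFunction ψ ∧ ContDiffOn ℝ 1 ψ (Set.Ici 0) ∧ ContDiffOn ℝ 2 ψ (Set.Ioi 0) ∧
    ∀ t > 0, 0 < deriv (deriv ψ) t

/-- A balanced N-function with characteristics `(γ₁, γ₂)`. -/
def IsBalancedNFunction (ψ : ℝ → ℝ) (γ₁ γ₂ : ℝ) : Prop :=
  IsRegularNFunction ψ ∧ 0 < γ₁ ∧ γ₁ ≤ 1 ∧ 1 ≤ γ₂ ∧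
    ∀ t > 0, γ₁ * deriv ψ t ≤ t * deriv (deriv ψ) t ∧
      t * deriv (deriv ψ) t ≤ γ₂ * deriv ψ t

/-- The conjugate N-function `ψ*(t) = sup_{s ≥ 0} (s·t − ψ(s))`. -/
def conjNF (ψ : ℝ → ℝ) (t : ℝ) : ℝ :=
  ⨆ s : Set.Ici (0:ℝ), ((s : ℝ) * t - ψ s)

/-- `ψ` satisfies the Δ₂-condition with constant `K`. -/
def SatisfiesDelta2 (ψ : ℝ → ℝ) (K : ℝ) : Prop :=
  2 < K ∧ ∀ t ≥ (0:ℝ), ψ (2 * t) ≤ K * ψ t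

/-- The derivative `ψ'_a(t) = ψ'(a+t)·t/(a+t)` of the shifted N-function. -/
def shiftDF (ψ : ℝ → ℝ) (a t : ℝ) : ℝ := deriv ψ (a + t) * t / (a + t)

/-- The shifted N-function `ψ_a(t) = ∫₀ᵗ ψ'(a+s)·s/(a+s) ds`. -/
def shiftNF (ψ : ℝ → ℝ) (a t : ℝ) : ℝ := ∫ s in (0:ℝ)..t, shiftDF ψ a s

/-- Frobenius norm of a `d×n` real matrix. -/
def frobNorm {d n : ℕ} (P : Fin d → Fin n → ℝ) : ℝ :=
  Real.sqrt (∑ i : Fin d, ∑ j : Fin n, (P i j) ^ 2)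

/-- Frobenius inner product `P : Q` of two `d×n` real matrices. -/
def frobInner {d n : ℕ} (P Q : Fin d → Fin n → ℝ) : ℝ :=
  ∑ i : Fin d, ∑ j : Fin n, P i j * Q i j

/-- `F(P) = √(φ'(|P|)/|P|)·P` (equal to `0` at `P = 0`). -/
def FmapNF (φ : ℝ → ℝ) {d n : ℕ} (P : Fin d → Fin n → ℝ) : Fin d → Fin n → ℝ :=
  Real.sqrt (deriv φ (frobNorm P) / frobNorm P) • P

/-- `F*(P) = √((φ*)'(|P|)/|P|)·P` (equal to `0` at `P = 0`). -/
def FstarNF (φ : ℝ → ℝ) {d n : ℕ} (P : Fin d → Fin n → ℝ) : Fin d → Fin n → ℝ :=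
  Real.sqrt (deriv (conjNF φ) (frobNorm P) / frobNorm P) • P

/-- The standard basis matrix with a `1` in entry `(k,l)`. -/
def basisMat {d n : ℕ} (k : Fin d) (l : Fin n) : Fin d → Fin n → ℝ :=
  fun i j => if i = k ∧ j = l then 1 else 0

/-- `𝒜` has `φ`-structure with constants `(γ₃, γ₄)`. -/
def HasPhiStructure {d n : ℕ} (A : (Fin d → Fin n → ℝ) → (Fin d → Fin n → ℝ))
    (φ : ℝ → ℝ) (γ₃ γ₄ : ℝ) : Prop :=
  0 < γ₃ ∧ γ₃ ≤ 1 ∧ 1 < γ₄ ∧ Continuous A ∧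
    ContDiffOn ℝ 1 A {P | P ≠ 0} ∧ A 0 = 0 ∧
    (∀ P : Fin d → Fin n → ℝ, P ≠ 0 → ∀ Q : Fin d → Fin n → ℝ,
      γ₃ * (deriv φ (frobNorm P) / frobNorm P) * (frobNorm Q) ^ 2 ≤
        ∑ i : Fin d, ∑ j : Fin n, ∑ k : Fin d, ∑ l : Fin n,
          fderiv ℝ A P (basisMat k l) i j * Q i j * Q k l) ∧
    (∀ P : Fin d → Fin n → ℝ, P ≠ 0 → ∀ (i k : Fin d) (j l : Fin n),
      |fderiv ℝ A P (basisMat k l) i j| ≤ γ₄ * (deriv φ (frobNorm P) / frobNorm P))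


/-! Helper lemmas -/

lemma cos_tangent {ψ : ℝ → ℝ} (h : IsRegularNFunction ψ) {x y : ℝ} (hx : 0 < x) (hy : 0 ≤ y) :
    ψ x + deriv ψ x * (y - x) ≤ ψ y := by
  obtain ⟨⟨hc, -⟩, -, h2, -⟩ := h
  have hd : DifferentiableAt ℝ ψ x :=
    (h2.differentiableOn (by norm_num)).differentiableAt (Ioi_mem_nhds hx)
  rcases lt_trichotomy x y with hxy | hxy | hxy
  · have := hc.deriv_le_slope (mem_Ici.2 hx.le) (mem_Ici.2 hy) hxy hd
    rw [slope_def_field, le_div_iff₀ (by linarith)] at this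
    linarith
  · subst hxy; simp
  · have := hc.slope_le_deriv (mem_Ici.2 hy) (mem_Ici.2 hx.le) hxy hd
    rw [slope_def_field, div_le_iff₀ (by linarith)] at this
    linarith

lemma cos_le_mul {ψ : ℝ → ℝ} (h : IsRegularNFunction ψ) {x : ℝ} (hx : 0 < x) :
    ψ x ≤ x * deriv ψ x := by
  have := cos_tangent h hx le_rfl
  rw [h.1.2.1] at this
  linarith

lemma cos_pos {ψ : ℝ → ℝ} (h : IsRegularNFunction ψ) {x : ℝ} (hx : 0 < x) :
    0 < deriv ψ x := by
  have h1 := cos_le_mul h hx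
  have h2 := h.1.2.2.1 x hx
  exact pos_of_mul_pos_right (lt_of_lt_of_le h2 h1) hx.le

lemma cos_mono {ψ : ℝ → ℝ} (h : IsRegularNFunction ψ) {x y : ℝ} (hx : 0 < x) (hxy : x ≤ y) :
    deriv ψ x ≤ deriv ψ y := by
  rcases hxy.eq_or_lt with rfl | hlt
  · exact le_rfl
  have h1 := cos_tangent h hx (hx.le.trans hxy)
  have h2 := cos_tangent h (hx.trans_le hxy) hx.le
  by_contra hcon
  push Not at hcon
  nlinarith

lemma cos_nonneg {ψ : ℝ → ℝ} (h : IsRegularNFunction ψ) {x : ℝ} (hx : 0 ≤ x) : 0 ≤ ψ x := by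
  rcases hx.eq_or_lt with rfl | hx
  · rw [h.1.2.1]
  · exact (h.1.2.2.1 x hx).le

lemma cos_double {ψ : ℝ → ℝ} (h : IsRegularNFunction ψ) {K : ℝ} (hK : SatisfiesDelta2 ψ K)
    {x : ℝ} (hx : 0 < x) : deriv ψ (2 * x) ≤ K ^ 2 * deriv ψ x := by
  have h1 := cos_tangent h (x := 2 * x) (y := 2 * (2 * x)) (by linarith) (by linarith)
  have h2 := hK.2 (2 * x) (by linarith)
  have h3 := hK.2 x hx.le
  have h4 := cos_le_mul h hx
  have h5 := h.1.2.2.1 x hx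
  have h6 := cos_pos h hx
  have h7 := cos_pos h (x := 2 * x) (by linarith)
  have hK0 := hK.1
  have h8 : deriv ψ (2 * x) * (2 * x) ≤ K * (K * ψ x) := by
    have : K * ψ (2 * x) ≤ K * (K * ψ x) := by gcongr
    have := cos_nonneg h (x := 2 * x) (by linarith)
    linarith
  have h9 : K * (K * ψ x) ≤ K * (K * (x * deriv ψ x)) := by gcongr
  have h10 : x * deriv ψ (2 * x) ≤ x * (K ^ 2 * deriv ψ x) := by nlinarith
  exact le_of_mul_le_mul_left h10 hx

lemma cos_double_pow {ψ : ℝ → ℝ} (h : IsRegularNFunction ψ) {K : ℝ} (hK : SatisfiesDelta2 ψ K)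
    (m : ℕ) {x : ℝ} (hx : 0 < x) : deriv ψ (2 ^ m * x) ≤ (K ^ 2) ^ m * deriv ψ x := by
  induction m with
  | zero => simp
  | succ m ih =>
    have := cos_double h hK (x := 2 ^ m * x) (by positivity)
    calc deriv ψ (2 ^ (m + 1) * x) = deriv ψ (2 * (2 ^ m * x)) := by ring_nf
      _ ≤ K ^ 2 * deriv ψ (2 ^ m * x) := this
      _ ≤ K ^ 2 * ((K ^ 2) ^ m * deriv ψ x) := by gcongr
      _ = _ := by ring

lemma cos_bdd {φ : ℝ → ℝ} {t : ℝ} (h0 : ∀ s, 0 ≤ s → 0 ≤ φ s) (ht : 0 ≤ t)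
    (hS : ∃ S, ∀ s, S ≤ s → s * t ≤ φ s) :
    BddAbove (range fun s : Set.Ici (0:ℝ) => ((s : ℝ) * t - φ s)) := by
  obtain ⟨S, hS⟩ := hS
  refine ⟨max S 0 * t, ?_⟩
  rintro _ ⟨⟨s, hs⟩, rfl⟩
  have hs : 0 ≤ s := hs
  simp only
  have hm : 0 ≤ max S 0 * t := mul_nonneg (le_max_right _ _) ht
  rcases le_total S s with h | h
  · have := hS s h
    linarith
  · have := h0 s hs
    have : s * t ≤ max S 0 * t := by
      gcongr
      exact h.trans (le_max_left _ _)
    linarith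

lemma cos_le_conj {φ : ℝ → ℝ} {t : ℝ}
    (hb : BddAbove (range fun s : Set.Ici (0:ℝ) => ((s : ℝ) * t - φ s))) {s : ℝ} (hs : 0 ≤ s) :
    s * t - φ s ≤ conjNF φ t :=
  le_ciSup hb (⟨s, hs⟩ : Set.Ici (0:ℝ))

lemma cos_conj_le {φ : ℝ → ℝ} {t B : ℝ} (h : ∀ s, 0 ≤ s → s * t - φ s ≤ B) :
    conjNF φ t ≤ B := by
  haveI : Nonempty (Set.Ici (0:ℝ)) := ⟨⟨0, mem_Ici.2 le_rfl⟩⟩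
  exact ciSup_le fun s => h s s.2

lemma cos_superlin {ψ : ℝ → ℝ} (h : IsRegularNFunction ψ) (t : ℝ) :
    ∃ S > 0, ∀ s, S ≤ s → s * t ≤ ψ s := by
  have := (tendsto_atTop.1 h.1.2.2.2.2 t)
  obtain ⟨S, hS⟩ := eventually_atTop.1 this
  refine ⟨max S 1, by positivity, fun s hs => ?_⟩
  have h1 := hS s ((le_max_left _ _).trans hs)
  have h2 : 0 < s := lt_of_lt_of_le one_pos ((le_max_right _ _).trans hs)
  rw [le_div_iff₀ h2] at h1
  linarith

lemma cos_nabla {ψ : ℝ → ℝ} (h : IsRegularNFunction ψ) {K : ℝ}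
    (hK : SatisfiesDelta2 (conjNF ψ) K) {s : ℝ} (hs : 0 < s) :
    K * ψ s ≤ ψ (K / 2 * s) := by
  have hK0 := hK.1
  have hu := cos_pos h hs
  have h1 : conjNF ψ (deriv ψ s) ≤ s * deriv ψ s - ψ s :=
    cos_conj_le fun y hy => by
      have := cos_tangent h hs hy
      linarith
  have h2 := hK.2 (deriv ψ s) hu.le
  obtain ⟨S, -, hS⟩ := cos_superlin h (2 * deriv ψ s)
  have hqs : 0 ≤ K / 2 * s := by positivity
  have h3 := cos_le_conj (cos_bdd (fun s hs => cos_nonneg h hs) (by linarith) ⟨S, hS⟩) hqs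
  have h4 : K * conjNF ψ (deriv ψ s) ≤ K * (s * deriv ψ s - ψ s) := by gcongr
  linarith

lemma cos_nabla_pow {ψ : ℝ → ℝ} (h : IsRegularNFunction ψ) {K : ℝ}
    (hK : SatisfiesDelta2 (conjNF ψ) K) (k : ℕ) {s : ℝ} (hs : 0 < s) :
    K ^ k * ψ s ≤ ψ ((K / 2) ^ k * s) := by
  have hK0 := hK.1
  induction k with
  | zero => simp
  | succ k ih =>
    calc K ^ (k + 1) * ψ s = K * (K ^ k * ψ s) := by ring
      _ ≤ K * ψ ((K / 2) ^ k * s) := by gcongr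
      _ ≤ ψ (K / 2 * ((K / 2) ^ k * s)) := cos_nabla h hK (by positivity)
      _ = _ := by ring_nf

/-- `f(x/L) ≤ 2^{-k}·2·f(x)` with `L = 2 (K/2)^k`. -/
lemma cos_nabla_deriv {ψ : ℝ → ℝ} (h : IsRegularNFunction ψ) {K : ℝ}
    (hK : SatisfiesDelta2 (conjNF ψ) K) (k : ℕ) {x : ℝ} (hx : 0 < x) :
    2 ^ k * deriv ψ x ≤ 2 * deriv ψ (2 * (K / 2) ^ k * x) := by
  have hK0 := hK.1
  have h1 := cos_nabla_pow h hK k (s := 2 * x) (by linarith)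
  have h2 := cos_tangent h (x := x) (y := 2 * x) hx (by linarith)
  have h3 := h.1.2.2.1 x hx
  have hq : 0 < (K / 2) ^ k := by positivity
  have h4 := cos_le_mul h (x := (K / 2) ^ k * (2 * x)) (by positivity)
  have h5 : x * deriv ψ x ≤ ψ (2 * x) := by linarith
  have h6 : K ^ k * (x * deriv ψ x) ≤ K ^ k * ψ (2 * x) := by gcongr
  have h7 : K ^ k = (K / 2) ^ k * 2 ^ k := by rw [← mul_pow]; congr 1; ring
  have h8 : ((K / 2) ^ k * x) * (2 ^ k * deriv ψ x) ≤
      ((K / 2) ^ k * x) * (2 * deriv ψ ((K / 2) ^ k * (2 * x))) := by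
    rw [h7] at h6 h1
    linarith
  have h9 := le_of_mul_le_mul_left h8 (by positivity)
  rwa [show (K / 2) ^ k * (2 * x) = 2 * (K / 2) ^ k * x by ring] at h9

lemma cos_g_zero (ψ : ℝ → ℝ) (a : ℝ) : shiftDF ψ a 0 = 0 := by simp [shiftDF]

lemma cos_g_nonneg {ψ : ℝ → ℝ} (h : IsRegularNFunction ψ) {a t : ℝ} (ha : 0 ≤ a) (ht : 0 ≤ t) :
    0 ≤ shiftDF ψ a t := by
  rcases ht.eq_or_lt with rfl | ht
  · rw [cos_g_zero]
  · have := cos_pos h (x := a + t) (by linarith)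
    unfold shiftDF
    positivity

lemma cos_g_mono {ψ : ℝ → ℝ} (h : IsRegularNFunction ψ) {a s t : ℝ} (ha : 0 ≤ a) (hs : 0 ≤ s)
    (hst : s ≤ t) : shiftDF ψ a s ≤ shiftDF ψ a t := by
  rcases hs.eq_or_lt with rfl | hs
  · rw [cos_g_zero]; exact cos_g_nonneg h ha hst
  have h1 := cos_pos h (x := a + s) (by linarith)
  have h2 := cos_mono h (x := a + s) (y := a + t) (by linarith) (by linarith)
  unfold shiftDF
  rw [mul_div_assoc, mul_div_assoc]
  have h3 : s / (a + s) ≤ t / (a + t) := by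
    rw [div_le_div_iff₀ (by linarith) (by linarith)]
    nlinarith
  have h4 : 0 ≤ s / (a + s) := by positivity
  exact mul_le_mul h2 h3 h4 (h1.le.trans h2)

lemma cos_g_int {ψ : ℝ → ℝ} (h : IsRegularNFunction ψ) {a s t : ℝ} (ha : 0 ≤ a) (hs : 0 ≤ s)
    (ht : 0 ≤ t) : IntervalIntegrable (shiftDF ψ a) MeasureTheory.volume s t := by
  apply MonotoneOn.intervalIntegrable
  intro x hx y hy hxy
  have : 0 ≤ x := (le_min hs ht).trans hx.1
  exact cos_g_mono h ha this hxy

lemma cos_G_zero (ψ : ℝ → ℝ) (a : ℝ) : shiftNF ψ a 0 = 0 := by simp [shiftNF]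

lemma cos_G_split {ψ : ℝ → ℝ} (h : IsRegularNFunction ψ) {a s t : ℝ} (ha : 0 ≤ a) (hs : 0 ≤ s)
    (hst : s ≤ t) : shiftNF ψ a s + (t - s) * shiftDF ψ a s ≤ shiftNF ψ a t := by
  have h1 := intervalIntegral.integral_add_adjacent_intervals
    (cos_g_int h ha le_rfl hs) (cos_g_int h ha hs (hs.trans hst))
  have h2 : (∫ _ in s..t, shiftDF ψ a s) ≤ ∫ x in s..t, shiftDF ψ a x :=
    intervalIntegral.integral_mono_on hst (by simp) (cos_g_int h ha hs (hs.trans hst))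
      fun x hx => cos_g_mono h ha hs hx.1
  rw [intervalIntegral.integral_const, smul_eq_mul] at h2
  unfold shiftNF
  linarith

lemma cos_G_nonneg {ψ : ℝ → ℝ} (h : IsRegularNFunction ψ) {a t : ℝ} (ha : 0 ≤ a) (ht : 0 ≤ t) :
    0 ≤ shiftNF ψ a t := by
  have := cos_G_split h ha le_rfl ht
  rw [cos_G_zero, cos_g_zero] at this
  linarith

lemma cos_G_mono {ψ : ℝ → ℝ} (h : IsRegularNFunction ψ) {a s t : ℝ} (ha : 0 ≤ a) (hs : 0 ≤ s)
    (hst : s ≤ t) : shiftNF ψ a s ≤ shiftNF ψ a t := by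
  have h1 := cos_G_split h ha hs hst
  have h2 := mul_nonneg (sub_nonneg.2 hst) (cos_g_nonneg h ha hs)
  linarith

lemma cos_G_double {ψ : ℝ → ℝ} (h : IsRegularNFunction ψ) {a s : ℝ} (ha : 0 ≤ a) (hs : 0 ≤ s) :
    s * shiftDF ψ a s ≤ shiftNF ψ a (2 * s) := by
  have h1 := cos_G_split h ha hs (t := 2 * s) (by linarith)
  have h2 := cos_G_nonneg h ha hs
  linarith

lemma cos_G_le {ψ : ℝ → ℝ} (h : IsRegularNFunction ψ) {a t : ℝ} (ha : 0 ≤ a) (ht : 0 ≤ t) :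
    shiftNF ψ a t ≤ t * shiftDF ψ a t := by
  have h2 : (∫ x in (0:ℝ)..t, shiftDF ψ a x) ≤ ∫ _ in (0:ℝ)..t, shiftDF ψ a t :=
    intervalIntegral.integral_mono_on ht (cos_g_int h ha le_rfl ht) (by simp)
      fun x hx => cos_g_mono h ha hx.1 hx.2
  rw [intervalIntegral.integral_const, smul_eq_mul] at h2
  unfold shiftNF
  linarith

lemma cos_G_scale {ψ : ℝ → ℝ} (h : IsRegularNFunction ψ) {a k r : ℝ} (ha : 0 ≤ a) (hr : 0 ≤ r)
    (hk : 0 ≤ k) (hk1 : k ≤ 1) : shiftNF ψ a (k * r) ≤ k * shiftNF ψ a r := by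
  have h1 := intervalIntegral.smul_integral_comp_mul_left (a := 0) (b := r) (shiftDF ψ a) k
  rw [mul_zero, smul_eq_mul] at h1
  unfold shiftNF
  rw [← h1]
  refine mul_le_mul_of_nonneg_left ?_ hk
  refine intervalIntegral.integral_mono_on hr ?_ (cos_g_int h ha le_rfl hr) ?_
  · apply MonotoneOn.intervalIntegrable
    intro x hx y hy hxy
    have : 0 ≤ x := (le_min le_rfl hr).trans hx.1
    exact cos_g_mono h ha (by positivity) (by gcongr)
  · intro x hx
    have hx0 := hx.1
    exact cos_g_mono h ha (by positivity) (by nlinarith)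

lemma cos_G_bdd {ψ : ℝ → ℝ} (h : IsRegularNFunction ψ) {a t : ℝ} (ha : 0 ≤ a) (ht : 0 ≤ t) :
    BddAbove (range fun s : Set.Ici (0:ℝ) => ((s : ℝ) * t - shiftNF ψ a s)) := by
  refine cos_bdd (fun s hs => cos_G_nonneg h ha hs) ht ?_
  obtain ⟨S, hS0, hS⟩ := cos_superlin h (4 * t)
  refine ⟨2 * (S + a), fun s hs => ?_⟩
  have hx : 0 < s / 2 := by linarith
  have h1 := hS (s / 2) (by linarith)
  have h2 := cos_le_mul h hx
  have h3 : 4 * t ≤ deriv ψ (s / 2) := le_of_mul_le_mul_left (h1.trans h2) hx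
  have h4 := cos_mono h hx (show s / 2 ≤ a + s / 2 by linarith)
  have h5 := cos_G_double h ha hx.le
  have h6 : 2 * t ≤ shiftDF ψ a (s / 2) := by
    unfold shiftDF
    rw [le_div_iff₀ (by linarith)]
    have : 4 * t * (s / 2) ≤ deriv ψ (a + s / 2) * (s / 2) := by
      gcongr; linarith
    have : 2 * t * a ≤ 2 * t * (s / 2) := by gcongr; linarith
    linarith
  have h7 : s / 2 * (2 * t) ≤ s / 2 * shiftDF ψ a (s / 2) := by gcongr
  rw [show 2 * (s / 2) = s by ring] at h5
  linarith

lemma cos_frob_norm {d n : ℕ} (P : Fin d → Fin n → ℝ) :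
    frobNorm P = ‖(WithLp.toLp 2 (fun p : Fin d × Fin n => P p.1 p.2) :
      EuclideanSpace ℝ (Fin d × Fin n))‖ := by
  rw [EuclideanSpace.norm_eq, frobNorm, Fintype.sum_prod_type]
  simp

lemma cos_frob_abs {d n : ℕ} (P Q : Fin d → Fin n → ℝ) :
    |frobNorm P - frobNorm Q| ≤ frobNorm (P - Q) := by
  rw [cos_frob_norm, cos_frob_norm, cos_frob_norm]
  exact abs_norm_sub_norm_le _ _

/-- First estimate in the regime `t ≥ κ|a-b|`. -/
lemma cos_first {ψ : ℝ → ℝ} (h : IsRegularNFunction ψ) {C C' a b t : ℝ} (hC : 1 ≤ C)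
    (hC' : ∀ x > 0, deriv ψ (2 * C * x) ≤ C' * deriv ψ x) (hC'0 : 1 ≤ C')
    (ha : 0 ≤ a) (hb : 0 ≤ b) (ht : 0 ≤ t)
    (hab : a + t ≤ C * (b + t)) (hba : b + t ≤ C * (a + t)) :
    shiftNF ψ a t ≤ 4 * C * C' * shiftNF ψ b t := by
  rcases ht.eq_or_lt with rfl | ht
  · simp [cos_G_zero]
  have h1 := cos_G_le h ha ht.le
  have h2 := cos_G_double h hb (s := t / 2) (by linarith)
  rw [show 2 * (t / 2) = t by ring] at h2
  have hf : deriv ψ (a + t) ≤ C' * deriv ψ (b + t / 2) := by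
    refine (cos_mono h (by linarith) ?_).trans (hC' (b + t / 2) (by linarith))
    nlinarith
  have hp := cos_pos h (x := a + t) (by linarith)
  have hp' := cos_pos h (x := b + t / 2) (by linarith)
  have hg : shiftDF ψ a t ≤ 2 * C * C' * shiftDF ψ b (t / 2) := by
    unfold shiftDF
    have e : 2 * C * C' * (deriv ψ (b + t / 2) * (t / 2) / (b + t / 2)) =
      (C' * deriv ψ (b + t / 2)) * (C * t / (b + t / 2)) := by
      field_simp
    rw [e, mul_div_assoc]
    refine mul_le_mul hf ?_ (by positivity) (hp.le.trans hf)
    rw [div_le_div_iff₀ (by linarith) (by linarith)]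
    have : b + t / 2 ≤ C * (a + t) := by linarith
    nlinarith
  have : t * shiftDF ψ a t ≤ t * (2 * C * C' * shiftDF ψ b (t / 2)) := by gcongr
  have : 4 * C * C' * (t / 2 * shiftDF ψ b (t / 2)) ≤ 4 * C * C' * shiftNF ψ b t := by gcongr
  linarith

/-- Key estimate for the second inequality. -/
lemma cos_key {ψ : ℝ → ℝ} (h : IsRegularNFunction ψ) {C C' L M a b s : ℝ} (hC : 1 ≤ C)
    (hC' : ∀ x > 0, deriv ψ (2 * C * x) ≤ C' * deriv ψ x) (hC'0 : 1 ≤ C')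
    (hL0 : 1 ≤ L) (hL : ∀ x > 0, 4 * (2 * C) * deriv ψ x ≤ deriv ψ (L * x))
    (hM : M = 4 * C' * C * (1 + 2 * L))
    (ha : 0 ≤ a) (hb : 0 ≤ b) (hs : 0 ≤ s)
    (hab : a + s ≤ C * (b + s)) (hba : b + s ≤ C * (a + s)) :
    4 * shiftDF ψ b (s / M) ≤ shiftDF ψ a s := by
  rcases hs.eq_or_lt with rfl | hs
  · simp [cos_g_zero]
  have hCC : 1 ≤ C' * C := by nlinarith
  have hM2 : 4 * (1 + 2 * L) ≤ M := by rw [hM]; nlinarith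
  have hMp : 0 < M := by linarith
  have hsM : 0 < s / M := by positivity
  have hsMs : s / M ≤ s / (2 * L) := by
    apply div_le_div_of_nonneg_left hs.le <;> linarith
  have hsM1 : s / M ≤ s := div_le_self hs.le (by linarith)
  have hpb := cos_pos h (x := b + s / M) (by linarith)
  have hpa := cos_pos h (x := a + s) (by linarith)
  have hp := cos_pos h hs
  rcases le_total b (s / (2 * L)) with hc | hc
  · -- small `b`
    have h1 : b + s / M ≤ s / L := by
      have : s / L = s / (2 * L) + s / (2 * L) := by field_simp; norm_num
      linarith
    have h2 := cos_mono h (by linarith) h1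
    have h3 := hL (s / L) (by positivity)
    rw [show L * (s / L) = s by field_simp] at h3
    have h4 : shiftDF ψ b (s / M) ≤ deriv ψ (b + s / M) := by
      unfold shiftDF
      rw [div_le_iff₀ (by linarith)]
      nlinarith
    have h5 : b ≤ s := by
      refine hc.trans (div_le_self hs.le (by linarith))
    have h6 : deriv ψ s ≤ 2 * C * shiftDF ψ a s := by
      unfold shiftDF
      rw [← mul_div_assoc, le_div_iff₀ (by linarith)]
      have i1 := cos_mono h hs (show s ≤ a + s by linarith)
      have i2 : a + s ≤ 2 * C * s := by nlinarith
      calc deriv ψ s * (a + s) ≤ deriv ψ (a + s) * (2 * C * s) := by gcongr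
        _ = _ := by ring
    have h7 : 2 * C * (4 * shiftDF ψ b (s / M)) ≤ 2 * C * shiftDF ψ a s := by
      have : 2 * C * (4 * shiftDF ψ b (s / M)) ≤ 2 * C * (4 * deriv ψ (s / L)) := by
        gcongr; exact h4.trans h2
      linarith
    exact le_of_mul_le_mul_left h7 (by linarith)
  · -- large `b`
    have hbp : 0 < b := lt_of_lt_of_le (by positivity) hc
    have hf : deriv ψ (b + s / M) ≤ C' * deriv ψ (a + s) := by
      refine (cos_mono h (by linarith) ?_).trans (hC' (a + s) (by linarith))
      nlinarith
    have hsb : s ≤ 2 * L * b := by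
      rw [div_le_iff₀ (by linarith)] at hc
      linarith
    have has : a + s ≤ C * (1 + 2 * L) * b := by
      calc a + s ≤ C * (b + s) := hab
        _ ≤ C * (b + 2 * L * b) := by gcongr
        _ = _ := by ring
    unfold shiftDF
    have e : 4 * (deriv ψ (b + s / M) * (s / M) / (b + s / M)) =
      deriv ψ (b + s / M) * (4 * (s / M) / (b + s / M)) := by ring
    have e2 : deriv ψ (a + s) * s / (a + s) = (C' * deriv ψ (a + s)) * (s / (C' * (a + s))) := by
      field_simp
    rw [e, e2]
    refine mul_le_mul hf ?_ (by positivity) (hpb.le.trans hf)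
    rw [div_le_div_iff₀ (by linarith) (by positivity)]
    have i1 : C' * (a + s) ≤ C' * (C * (1 + 2 * L) * b) := by gcongr
    have i2 : 4 * (s / M) * (C' * (a + s)) ≤ 4 * (s / M) * (C' * (C * (1 + 2 * L) * b)) := by
      gcongr
    have i3 : 4 * (s / M) * (C' * (C * (1 + 2 * L) * b)) = s * b := by
      have : 4 * (s / M) * (C' * (C * (1 + 2 * L) * b)) = s / M * (4 * C' * C * (1 + 2 * L)) * b := by
        ring
      rw [this, ← hM]
      field_simp
    nlinarith

lemma cos_second {ψ : ℝ → ℝ} (h : IsRegularNFunction ψ) {M a b y δ r t : ℝ}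
    (hM : 0 < M) (ha : 0 ≤ a) (hb : 0 ≤ b) (ht : 0 ≤ t) (hy : 0 ≤ y)
    (hδ : 0 ≤ δ * shiftNF ψ a r)
    (hyr : y * shiftDF ψ a y ≤ δ * shiftNF ψ a r)
    (key : ∀ s, y ≤ s → 4 * shiftDF ψ b (s / M) ≤ shiftDF ψ a s) :
    conjNF (shiftNF ψ a) t ≤ 4 * M * conjNF (shiftNF ψ b) t + δ * shiftNF ψ a r := by
  have hbd := cos_G_bdd h hb ht
  have h0 : 0 ≤ conjNF (shiftNF ψ b) t := by
    have := cos_le_conj hbd le_rfl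
    simpa [cos_G_zero] using this
  have main : ∀ x, y ≤ x → shiftDF ψ a x ≤ 2 * t → x * t ≤ 2 * M * conjNF (shiftNF ψ b) t := by
    intro x hx hg
    have hx0 := hy.trans hx
    have hxM : 0 ≤ x / M := by positivity
    have h1 := key x hx
    have h2 := cos_le_conj hbd hxM
    have h3 := cos_G_le h hb hxM
    have h4 : x / M * shiftDF ψ b (x / M) ≤ x / M * (t / 2) := by
      gcongr; linarith
    have h5 : x / M * t / 2 ≤ conjNF (shiftNF ψ b) t := by linarith
    calc x * t = 2 * M * (x / M * t / 2) := by field_simp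
      _ ≤ _ := by gcongr
  have hMc : 0 ≤ 4 * M * conjNF (shiftNF ψ b) t := by positivity
  refine cos_conj_le fun s hs => ?_
  have hGs := cos_G_nonneg h ha hs
  rcases le_total (s * t) (shiftNF ψ a s) with hneg | hpos
  · linarith
  rcases hs.eq_or_lt with rfl | hs
  · linarith
  have h1 := cos_G_double h ha (s := s / 2) (by linarith)
  rw [show 2 * (s / 2) = s by ring] at h1
  have h2 : shiftDF ψ a (s / 2) ≤ 2 * t := by
    have : s / 2 * shiftDF ψ a (s / 2) ≤ s / 2 * (2 * t) := by linarith
    exact le_of_mul_le_mul_left this (by linarith)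
  rcases le_total y (s / 2) with hc | hc
  · have := main _ hc h2
    linarith
  · have hst : s * t ≤ 2 * (y * t) := by nlinarith
    rcases le_total (shiftDF ψ a y) (2 * t) with hd | hd
    · have := main _ le_rfl hd
      linarith
    · have : y * (2 * t) ≤ y * shiftDF ψ a y := by gcongr
      linarith

/-- change of shift: for every `δ ∈ (0,1)` there is `c_δ > 0`, depending
only on `δ` and the Δ₂-constants of `ψ` and `ψ*`, such that
`ψ_{|P|}(t) ≤ c_δ·ψ_{|Q|}(t) + δ·ψ_{|P|}(|P−Q|)` and
`(ψ_{|P|})*(t) ≤ c_δ·(ψ_{|Q|})*(t) + δ·ψ_{|P|}(|P−Q|)`. -/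
theorem change_of_shift (K₁ K₂ δ : ℝ) (hδ : 0 < δ) (hδ' : δ < 1) :
    ∃ c > (0:ℝ), ∀ ψ : ℝ → ℝ, IsRegularNFunction ψ →
      SatisfiesDelta2 ψ K₁ → SatisfiesDelta2 (conjNF ψ) K₂ →
      ∀ d n : ℕ, 1 ≤ d → 1 ≤ n → ∀ P Q : Fin d → Fin n → ℝ, ∀ t ≥ (0:ℝ),
        shiftNF ψ (frobNorm P) t ≤
            c * shiftNF ψ (frobNorm Q) t + δ * shiftNF ψ (frobNorm P) (frobNorm (P - Q)) ∧
          conjNF (shiftNF ψ (frobNorm P)) t ≤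
            c * conjNF (shiftNF ψ (frobNorm Q)) t +
              δ * shiftNF ψ (frobNorm P) (frobNorm (P - Q)) := by
  by_cases hK : 2 < K₁ ∧ 2 < K₂
  swap
  · exact ⟨1, one_pos, fun ψ _ h1 h2 => absurd ⟨h1.1, h2.1⟩ hK⟩
  obtain ⟨hK1, hK2⟩ := hK
  obtain ⟨C, hCdef⟩ : ∃ C, C = 1 + 2 / δ := ⟨_, rfl⟩
  have hC : 1 ≤ C := by
    have : 0 < 2 / δ := by positivity
    linarith
  obtain ⟨m, hm⟩ := pow_unbounded_of_one_lt (2 * C) (one_lt_two (α := ℝ))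
  obtain ⟨C', hC'def⟩ : ∃ C', C' = (K₁ ^ 2) ^ m := ⟨_, rfl⟩
  have hC'0 : 1 ≤ C' := by
    rw [hC'def]; exact one_le_pow₀ (by nlinarith)
  obtain ⟨k, hk⟩ := pow_unbounded_of_one_lt (2 * (4 * (2 * C))) (one_lt_two (α := ℝ))
  obtain ⟨L, hLdef⟩ : ∃ L, L = 2 * (K₂ / 2) ^ k := ⟨_, rfl⟩
  have hL0 : 1 ≤ L := by
    have : 1 ≤ (K₂ / 2) ^ k := one_le_pow₀ (by linarith)
    linarith
  obtain ⟨M, hM⟩ : ∃ M, M = 4 * C' * C * (1 + 2 * L) := ⟨_, rfl⟩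
  have hMp : 0 < M := by rw [hM]; positivity
  refine ⟨4 * C * C' + 4 * M, by positivity, ?_⟩
  intro ψ h h1 h2 d n _ _ P Q t ht
  have hab := cos_frob_abs P Q
  have ha : 0 ≤ frobNorm P := Real.sqrt_nonneg _
  have hb : 0 ≤ frobNorm Q := Real.sqrt_nonneg _
  have hr : 0 ≤ frobNorm (P - Q) := Real.sqrt_nonneg _
  generalize frobNorm P = a at *
  generalize frobNorm Q = b at *
  generalize frobNorm (P - Q) = r at *
  obtain ⟨hab1, hab2⟩ := abs_le.1 hab
  have hC' : ∀ x > 0, deriv ψ (2 * C * x) ≤ C' * deriv ψ x := by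
    intro x hx
    rw [hC'def]
    refine (cos_mono h (by positivity) ?_).trans (cos_double_pow h h1 m hx)
    gcongr
  have hL : ∀ x > 0, 4 * (2 * C) * deriv ψ x ≤ deriv ψ (L * x) := by
    intro x hx
    have i1 := cos_nabla_deriv h h2 k hx
    have i2 := cos_pos h hx
    rw [← hLdef] at i1
    nlinarith
  have hcomp : ∀ s, δ / 2 * r ≤ s → 0 ≤ s ∧ a + s ≤ C * (b + s) ∧ b + s ≤ C * (a + s) := by
    intro s hs
    have hs0 : 0 ≤ s := le_trans (by positivity) hs
    have hrs : r ≤ 2 / δ * s := by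
      rw [div_mul_eq_mul_div, le_div_iff₀ hδ]
      linarith
    have hd : 0 < 2 / δ := by positivity
    have i1 : 0 ≤ 2 / δ * a := by positivity
    have i2 : 0 ≤ 2 / δ * b := by positivity
    refine ⟨hs0, ?_, ?_⟩ <;> rw [hCdef] <;> linarith
  have hGr := cos_G_nonneg h ha hr
  have hδG : 0 ≤ δ * shiftNF ψ a r := by positivity
  have hGb := cos_G_nonneg h hb ht
  constructor
  · rcases le_total (δ / 2 * r) t with hc | hc
    · obtain ⟨-, i1, i2⟩ := hcomp t hc
      have := cos_first h hC hC' hC'0 ha hb ht i1 i2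
      have : 0 ≤ 4 * M * shiftNF ψ b t := by positivity
      linarith
    · have j1 := cos_G_mono h ha ht hc
      have j2 := cos_G_scale h ha hr (k := δ / 2) (by linarith) (by linarith)
      have : 0 ≤ (4 * C * C' + 4 * M) * shiftNF ψ b t := by positivity
      linarith
  · have hy : 0 ≤ δ / 2 * r := by positivity
    have hyr : δ / 2 * r * shiftDF ψ a (δ / 2 * r) ≤ δ * shiftNF ψ a r := by
      have j1 := cos_G_double h ha hy
      have j2 := cos_G_scale h ha hr (k := δ) (by linarith) (by linarith)
      rw [show 2 * (δ / 2 * r) = δ * r by ring] at j1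
      linarith
    have := cos_second h hMp ha hb ht hy hδG hyr (fun s hs => by
      obtain ⟨i0, i1, i2⟩ := hcomp s hs
      exact cos_key h hC hC' hC'0 hL0 hL hM ha hb i0 i1 i2)
    have h0 : 0 ≤ conjNF (shiftNF ψ b) t := by
      have := cos_le_conj (cos_G_bdd h hb ht) le_rfl
      simpa [cos_G_zero] using this
    have : 0 ≤ 4 * C * C' * conjNF (shiftNF ψ b) t := by positivity
    linarith

end
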